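/- arXiv:2007.08829 — 2 statements merged into one kernel-verified Lean document; each statement's English description precedes it below -/
import Mathlib

section
/- Let n ∈ ℕ and g ∈ G. Then the n-fold inf-convolution of ES^g with itself satisfies, for every X ∈ L^1, (□_{i=1}^n ES^g)(X) = ES^{ng}(X), where ng denotes the risk profile p ↦ n·g(p). -/
open MeasureTheory Set Filter

variable {Ω : Type*} [MeasurableSpace Ω]

/-- An atomless probability space: every set of positive measure has a subset of
strictly smaller positive measure. -/
def Atomless (μ : Measure Ω) : Prop :=
  ∀ A : Set Ω, MeasurableSet A → 0 < μ A →
    ∃ B : Set Ω, MeasurableSet B ∧ B ⊆ A ∧ 0 < μ B ∧ μ B < μ A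

/-- Value at Risk at level `p`: the left `p`-quantile for `p ∈ (0,1]`, the essential
infimum for `p = 0`.  Values are extended reals. -/
noncomputable def VaR (μ : Measure Ω) (X : Ω → ℝ) (p : ℝ) : EReal :=
  if p = 0 then essInf (fun ω => (X ω : EReal)) μ
  else sInf ((fun x : ℝ => (x : EReal)) '' {x : ℝ | ENNReal.ofReal p ≤ μ {ω | X ω ≤ x}})

/-- Real-valued version of the left `p`-quantile, used as the integrand of ES. -/
noncomputable def VaRr (μ : Measure Ω) (X : Ω → ℝ) (p : ℝ) : ℝ :=
  sInf {x : ℝ | ENNReal.ofReal p ≤ μ {ω | X ω ≤ x}}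

/-- Expected Shortfall at level `p`: `(1/(1-p)) ∫_p^1 VaR_q(X) dq` for `p ∈ [0,1)`,
the essential supremum for `p = 1`. -/
noncomputable def ES (μ : Measure Ω) (X : Ω → ℝ) (p : ℝ) : EReal :=
  if p = 1 then essSup (fun ω => (X ω : EReal)) μ
  else (((1 - p)⁻¹ * ∫ q in Set.Ioo p 1, VaRr μ X q : ℝ) : EReal)

/-- The `g`-adjusted Expected Shortfall, `sup_{p ∈ [0,1]} (ES_p(X) - g(p))`.
Note that in `EReal` one has `⊤ - ⊤ = ⊥`, matching the convention `∞ - ∞ = -∞`. -/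
noncomputable def adjES (μ : Measure Ω) (g : ℝ → EReal) (X : Ω → ℝ) : EReal :=
  ⨆ p ∈ Set.Icc (0:ℝ) 1, (ES μ X p - g p)

/-- The class `𝒢` of risk profiles: increasing functions `[0,1] → (-∞,∞]` that are
not identically `∞`. -/
def IsRiskProfile (g : ℝ → EReal) : Prop :=
  MonotoneOn g (Set.Icc (0:ℝ) 1) ∧ (∀ p ∈ Set.Icc (0:ℝ) 1, g p ≠ ⊥) ∧
    ∃ p ∈ Set.Icc (0:ℝ) 1, g p ≠ ⊤

/-- Second-order stochastic dominance: `SSD μ X Y` means `X ≥_SSD Y`, i.e. every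
risk-averse agent prefers `X` to `Y` (positive values are losses). -/
def SSD (μ : Measure Ω) (X Y : Ω → ℝ) : Prop :=
  ∀ u : ℝ → ℝ, Monotone u → ConcaveOn ℝ Set.univ u →
    ∫ ω, u (-(Y ω)) ∂μ ≤ ∫ ω, u (-(X ω)) ∂μ

/-- The inf-convolution of the functionals `ρ_1, …, ρ_n`. -/
noncomputable def infConv (μ : Measure Ω) {n : ℕ} (ρ : Fin n → ((Ω → ℝ) → EReal))
    (X : Ω → ℝ) : EReal :=
  ⨅ (Y : Fin n → Ω → ℝ) (_ : (∀ i, Integrable (Y i) μ) ∧ ∀ ω, (∑ i, Y i ω) = X ω),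
    ∑ i, ρ i (Y i)

/-- The class `𝒢_VaR`: risk profiles finite on `[0,1)`, left-continuous on `[0,1]`
and right-continuous at `0`. -/
def GVaRProfile (g : ℝ → EReal) : Prop :=
  IsRiskProfile g ∧ (∀ p ∈ Set.Ico (0:ℝ) 1, g p ≠ ⊤) ∧
    (∀ p ∈ Set.Ioc (0:ℝ) 1, Filter.Tendsto g (nhdsWithin p (Set.Ico 0 p)) (nhds (g p))) ∧
    Filter.Tendsto g (nhdsWithin 0 (Set.Ioc 0 1)) (nhds (g 0))

/-- The class `𝒢_ES`: profiles in `𝒢_VaR` such that `h_g(p) = (1-p)g(p)` is concave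
on `(0,1)` and left-continuous at `1` (with `h_g(1) = 0` by the convention `0·∞ = 0`). -/
def GESProfile (g : ℝ → EReal) : Prop :=
  GVaRProfile g ∧ ConcaveOn ℝ (Set.Ioo (0:ℝ) 1) (fun p => (1 - p) * (g p).toReal) ∧
    Filter.Tendsto (fun p => (1 - p) * (g p).toReal) (nhdsWithin 1 (Set.Ico (0:ℝ) 1)) (nhds 0)

lemma aux_set (μ : Measure Ω) [IsProbabilityMeasure μ] (X : Ω → ℝ) (hX : AEMeasurable X μ)
    {q : ℝ} (hq : 0 < q) :
    {x : ℝ | ENNReal.ofReal q ≤ μ {ω | X ω ≤ x}}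
      = {x : ℝ | q ≤ ProbabilityTheory.cdf (μ.map X) x} := by
  have : IsProbabilityMeasure (μ.map X) := Measure.isProbabilityMeasure_map hX
  ext x
  simp only [mem_ofPred_eq]
  have h1 : μ {ω | X ω ≤ x} = (μ.map X) (Iic x) := by
    rw [Measure.map_apply_of_aemeasurable hX measurableSet_Iic]; rfl
  rw [h1, ← ProbabilityTheory.ofReal_cdf,
    ENNReal.ofReal_le_ofReal_iff (ProbabilityTheory.cdf_nonneg _ _)]

lemma aux_galois (μ : Measure Ω) [IsProbabilityMeasure μ] (X : Ω → ℝ) (hX : AEMeasurable X μ)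
    {q : ℝ} (hq : q ∈ Ioo (0:ℝ) 1) (x : ℝ) :
    VaRr μ X q ≤ x ↔ q ≤ ProbabilityTheory.cdf (μ.map X) x := by
  have : IsProbabilityMeasure (μ.map X) := Measure.isProbabilityMeasure_map hX
  unfold VaRr
  rw [aux_set μ X hX hq.1]
  set F := ProbabilityTheory.cdf (μ.map X)
  have hne : {x : ℝ | q ≤ F x}.Nonempty := by
    have := (ProbabilityTheory.tendsto_cdf_atTop (μ.map X)).eventually (lt_mem_nhds hq.2)
    obtain ⟨y, hy⟩ := this.exists
    exact ⟨y, hy.le⟩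
  have hbd : BddBelow {x : ℝ | q ≤ F x} := by
    have := (ProbabilityTheory.tendsto_cdf_atBot (μ.map X)).eventually (gt_mem_nhds hq.1)
    obtain ⟨y, hy⟩ := this.exists
    refine ⟨y, fun z hz => ?_⟩
    by_contra h
    push Not at h
    have := F.mono h.le
    have hz' : q ≤ F z := hz
    have hy' : F y < q := hy
    linarith
  constructor
  · intro h
    have hr : Tendsto F (nhdsWithin x (Ioi x)) (nhds (F x)) :=
      ((F.right_continuous x).mono Ioi_subset_Ici_self)
    refine ge_of_tendsto hr ?_
    filter_upwards [self_mem_nhdsWithin] with y hy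
    obtain ⟨z, hz, hzy⟩ := exists_lt_of_csInf_lt hne (lt_of_le_of_lt h hy)
    exact le_trans hz (F.mono hzy.le)
  · intro h
    exact csInf_le hbd h

lemma aux_mono (μ : Measure Ω) [IsProbabilityMeasure μ] (X : Ω → ℝ) (hX : AEMeasurable X μ) :
    MonotoneOn (VaRr μ X) (Ioo (0:ℝ) 1) := by
  intro a ha b hb hab
  rw [aux_galois μ X hX ha]
  exact hab.trans ((aux_galois μ X hX hb _).1 le_rfl)

lemma aux_aem (μ : Measure Ω) [IsProbabilityMeasure μ] (X : Ω → ℝ) (hX : AEMeasurable X μ) :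
    AEMeasurable (VaRr μ X) (volume.restrict (Ioo (0:ℝ) 1)) :=
  aemeasurable_restrict_of_monotoneOn measurableSet_Ioo (aux_mono μ X hX)

lemma aux_map (μ : Measure Ω) [IsProbabilityMeasure μ] (X : Ω → ℝ) (hX : AEMeasurable X μ) :
    (volume.restrict (Ioo (0:ℝ) 1)).map (VaRr μ X) = μ.map X := by
  have : IsProbabilityMeasure (μ.map X) := Measure.isProbabilityMeasure_map hX
  have hfin : IsFiniteMeasure ((volume.restrict (Ioo (0:ℝ) 1)).map (VaRr μ X)) := by
    infer_instance
  refine Measure.ext_of_Iic _ _ fun x => ?_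
  rw [Measure.map_apply_of_aemeasurable (aux_aem μ X hX) measurableSet_Iic,
    Measure.restrict_apply' measurableSet_Ioo, ← ProbabilityTheory.ofReal_cdf]
  have hs : VaRr μ X ⁻¹' Iic x ∩ Ioo 0 1
      = Iic (ProbabilityTheory.cdf (μ.map X) x) ∩ Ioo 0 1 := by
    ext q
    simp only [mem_inter_iff, mem_preimage, mem_Iic]
    exact and_congr_left fun hq => aux_galois μ X hX hq x
  rw [hs]
  set c := ProbabilityTheory.cdf (μ.map X) x
  have hc1 : c ≤ 1 := ProbabilityTheory.cdf_le_one _ _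
  apply le_antisymm
  · calc volume (Iic c ∩ Ioo 0 1) ≤ volume (Ioc 0 c) :=
        measure_mono fun q hq => ⟨hq.2.1, hq.1⟩
      _ = ENNReal.ofReal c := by simp
  · calc ENNReal.ofReal c = volume (Ioo 0 c) := by simp
      _ ≤ volume (Iic c ∩ Ioo 0 1) :=
        measure_mono fun q hq => ⟨hq.2.le, hq.1, hq.2.trans_le hc1⟩

lemma aux_int (μ : Measure Ω) [IsProbabilityMeasure μ] (X : Ω → ℝ) (hX : AEMeasurable X μ)
    (f : ℝ → ℝ) (hf : Continuous f) :
    ∫ q in Ioo (0:ℝ) 1, f (VaRr μ X q) = ∫ ω, f (X ω) ∂μ := by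
  rw [← integral_map (aux_aem μ X hX) hf.aestronglyMeasurable, aux_map μ X hX,
    integral_map hX hf.aestronglyMeasurable]

lemma aux_integrable (μ : Measure Ω) [IsProbabilityMeasure μ] (X : Ω → ℝ) (hX : Integrable X μ) :
    IntegrableOn (VaRr μ X) (Ioo (0:ℝ) 1) := by
  have h1 : Integrable (id : ℝ → ℝ) (μ.map X) :=
    (integrable_map_measure measurable_id.aestronglyMeasurable hX.aemeasurable).2 hX
  rw [← aux_map μ X hX.aemeasurable] at h1
  exact (integrable_map_measure measurable_id.aestronglyMeasurable (aux_aem μ X hX.aemeasurable)).1 h1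

/-- upper bound in the Rockafellar-Uryasev formula -/
lemma aux_ru_le (μ : Measure Ω) [IsProbabilityMeasure μ] (X : Ω → ℝ) (hX : Integrable X μ)
    {p : ℝ} (hp : p ∈ Ico (0:ℝ) 1) (t : ℝ) :
    ∫ q in Ioo p 1, VaRr μ X q ≤ (1 - p) * t + ∫ ω, max (X ω - t) 0 ∂μ := by
  have hV := aux_integrable μ X hX
  have hsub : Ioo p 1 ⊆ Ioo (0:ℝ) 1 := Ioo_subset_Ioo_left hp.1
  have hc : IntegrableOn (fun _ : ℝ => t) (Ioo (0:ℝ) 1) := by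
    exact integrable_const t
  have hm : IntegrableOn (fun q => max (VaRr μ X q - t) 0) (Ioo (0:ℝ) 1) :=
    (hV.sub hc).pos_part
  rw [← aux_int μ X hX.aemeasurable (fun x => max (x - t) 0) (by fun_prop)]
  calc ∫ q in Ioo p 1, VaRr μ X q ≤ ∫ q in Ioo p 1, (t + max (VaRr μ X q - t) 0) := by
        apply integral_mono (hV.mono_set hsub) ((hc.mono_set hsub).add (hm.mono_set hsub))
        intro q
        have := le_max_left (VaRr μ X q - t) 0
        change VaRr μ X q ≤ t + max (VaRr μ X q - t) 0
        linarith
    _ = (1 - p) * t + ∫ q in Ioo p 1, max (VaRr μ X q - t) 0 := by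
        rw [integral_add (hc.mono_set hsub) (hm.mono_set hsub)]
        simp [hp.2.le]
    _ ≤ _ := by
        gcongr
        · exact ae_of_all _ fun q => le_max_right (VaRr μ X q - t) 0

lemma aux_ru_eq (μ : Measure Ω) [IsProbabilityMeasure μ] (X : Ω → ℝ) (hX : Integrable X μ)
    {p : ℝ} (hp : p ∈ Ioo (0:ℝ) 1) :
    ∫ q in Ioo p 1, VaRr μ X q
      = (1 - p) * VaRr μ X p + ∫ ω, max (X ω - VaRr μ X p) 0 ∂μ := by
  have hV := aux_integrable μ X hX
  set t := VaRr μ X p with ht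
  have hsub : Ioo p 1 ⊆ Ioo (0:ℝ) 1 := Ioo_subset_Ioo_left hp.1.le
  have hc : IntegrableOn (fun _ : ℝ => t) (Ioo (0:ℝ) 1) := by
    exact integrable_const t
  have hmono := aux_mono μ X hX.aemeasurable
  rw [← aux_int μ X hX.aemeasurable (fun x => max (x - t) 0) (by fun_prop)]
  have h1 : ∫ q in Ioo (0:ℝ) 1, max (VaRr μ X q - t) 0
      = ∫ q in Ioo p 1, max (VaRr μ X q - t) 0 := by
    apply setIntegral_eq_of_subset_of_forall_sdiff_eq_zero measurableSet_Ioo hsub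
    rintro q ⟨hq, hq'⟩
    have : q ≤ p := by
      by_contra h
      push Not at h
      exact hq' ⟨h, hq.2⟩
    have := hmono hq hp this
    apply max_eq_right
    linarith
  have h2 : ∫ q in Ioo p 1, max (VaRr μ X q - t) 0 = ∫ q in Ioo p 1, (VaRr μ X q - t) := by
    apply setIntegral_congr_fun measurableSet_Ioo
    intro q hq
    have := hmono hp (hsub hq) hq.1.le
    apply max_eq_left
    linarith
  rw [h1, h2, integral_sub (hV.mono_set hsub) (hc.mono_set hsub)]
  simp [hp.2.le]

lemma aux_subadd (μ : Measure Ω) [IsProbabilityMeasure μ] {n : ℕ} (X : Ω → ℝ)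
    (hX : Integrable X μ) (Y : Fin n → Ω → ℝ) (hY : ∀ i, Integrable (Y i) μ)
    (hs : ∀ ω, ∑ i, Y i ω = X ω) {p : ℝ} (hp : p ∈ Ico (0:ℝ) 1) :
    ∫ q in Ioo p 1, VaRr μ X q ≤ ∑ i, ∫ q in Ioo p 1, VaRr μ (Y i) q := by
  rcases hp.1.eq_or_lt with h0 | h0
  · subst h0
    have h1 := aux_int μ X hX.aemeasurable (fun x => x) continuous_id
    have h2 := fun i => aux_int μ (Y i) (hY i).aemeasurable (fun x => x) continuous_id
    simp only [h1, h2]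
    rw [← integral_finsetSum _ fun i _ => hY i]
    simp [hs]
  · have hp' : p ∈ Ioo (0:ℝ) 1 := ⟨h0, hp.2⟩
    have hI : ∀ i, Integrable (fun ω => max (Y i ω - VaRr μ (Y i) p) 0) μ :=
      fun i => ((hY i).sub (integrable_const _)).pos_part
    refine (aux_ru_le μ X hX hp (∑ i, VaRr μ (Y i) p)).trans ?_
    simp only [aux_ru_eq μ (Y _) (hY _) hp']
    rw [Finset.sum_add_distrib, ← Finset.mul_sum, ← integral_finsetSum _ fun i _ => hI i]
    refine add_le_add le_rfl ?_
    apply integral_mono ((hX.sub (integrable_const _)).pos_part)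
      (integrable_finsetSum _ fun i _ => hI i)
    intro ω
    simp only
    apply max_le
    · change X ω - ∑ i, VaRr μ (Y i) p ≤ _
      rw [← hs, ← Finset.sum_sub_distrib]
      exact Finset.sum_le_sum fun i _ => le_max_left _ _
    · exact Finset.sum_nonneg fun i _ => le_max_right _ _

lemma aux_coe_sum {n : ℕ} (f : Fin n → ℝ) :
    ((∑ i, f i : ℝ) : EReal) = ∑ i, (f i : EReal) :=
  map_sum (⟨⟨Real.toEReal, EReal.coe_zero⟩, EReal.coe_add⟩ : ℝ →+ EReal) f Finset.univ

lemma aux_ES_subadd (μ : Measure Ω) [IsProbabilityMeasure μ] {n : ℕ} (X : Ω → ℝ)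
    (hX : Integrable X μ) (Y : Fin n → Ω → ℝ) (hY : ∀ i, Integrable (Y i) μ)
    (hs : ∀ ω, ∑ i, Y i ω = X ω) {p : ℝ} (hp : p ∈ Icc (0:ℝ) 1) :
    ES μ X p ≤ ∑ i, ES μ (Y i) p := by
  unfold ES
  split_ifs with h
  · refine essSup_le_of_ae_le _ ?_
    have h1 : ∀ᵐ ω ∂μ, ∀ i, (Y i ω : EReal) ≤ essSup (fun ω => (Y i ω : EReal)) μ :=
      ae_all_iff.2 fun i => ae_le_essSup
    filter_upwards [h1] with ω hω
    rw [← hs, aux_coe_sum]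
    exact Finset.sum_le_sum fun i _ => hω i
  · have hp' : p ∈ Ico (0:ℝ) 1 := ⟨hp.1, lt_of_le_of_ne hp.2 h⟩
    rw [← aux_coe_sum, EReal.coe_le_coe_iff, ← Finset.mul_sum]
    have : 0 ≤ (1 - p)⁻¹ := inv_nonneg.2 (by linarith [hp.2])
    exact mul_le_mul_of_nonneg_left (aux_subadd μ X hX Y hY hs hp') this

lemma aux_VaR_scale (μ : Measure Ω) (X : Ω → ℝ) {c : ℝ} (hc : 0 < c) (q : ℝ) :
    c * VaRr μ (fun ω => X ω / c) q = VaRr μ X q := by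
  unfold VaRr
  rw [← smul_eq_mul, ← Real.sInf_smul_of_nonneg hc.le]
  congr 1
  ext x
  rw [Set.mem_smul_set_iff_inv_smul_mem₀ hc.ne']
  simp only [mem_ofPred_eq, smul_eq_mul]
  have : ∀ ω, X ω / c ≤ c⁻¹ * x ↔ X ω ≤ x := fun ω => by
    rw [div_eq_inv_mul]
    exact mul_le_mul_iff_right₀ (inv_pos.2 hc)
  simp only [this]

lemma aux_ES_scale (μ : Measure Ω) [IsProbabilityMeasure μ] {n : ℕ} (hn : 0 < n) (X : Ω → ℝ)
    (p : ℝ) : (n : EReal) * ES μ (fun ω => X ω / n) p ≤ ES μ X p := by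
  have hn0 : (0:EReal) < (n:EReal) := by exact_mod_cast hn
  have hnt : (n:EReal) ≠ ⊤ := EReal.natCast_ne_top n
  have hnr : (0:ℝ) < n := by exact_mod_cast hn
  unfold ES
  split_ifs with h
  · rw [mul_comm, ← EReal.le_div_iff_mul_le hn0 hnt]
    refine essSup_le_of_ae_le _ ?_
    have h1 : ∀ᵐ ω ∂μ, (X ω : EReal) ≤ essSup (fun ω => (X ω : EReal)) μ := ae_le_essSup
    filter_upwards [h1] with ω hω
    rw [EReal.le_div_iff_mul_le hn0 hnt]
    refine le_trans (le_of_eq ?_) hω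
    rw [← EReal.coe_coe_eq_natCast, ← EReal.coe_mul]
    congr 1
    field_simp
  · rw [← EReal.coe_coe_eq_natCast, ← EReal.coe_mul, EReal.coe_le_coe_iff]
    apply le_of_eq
    rw [mul_left_comm, ← integral_const_mul]
    simp only [aux_VaR_scale μ X hnr]

lemma aux_mul_sub (n : ℕ) (a b : EReal) : (n:EReal) * (a - b) = n * a - n * b := by
  rw [sub_eq_add_neg, EReal.left_distrib_of_nonneg_of_ne_top (by positivity)
    (EReal.natCast_ne_top n), mul_neg, ← sub_eq_add_neg]

/-- For `g ∈ 𝒢`, the `n`-fold inf-convolution of `ES^g` with itself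
equals `ES^{ng}`. -/
theorem stmt7 (μ : Measure Ω) [IsProbabilityMeasure μ] (hatomless : Atomless μ)
    (n : ℕ) (hn : 0 < n) (g : ℝ → EReal) (hg : IsRiskProfile g)
    (X : Ω → ℝ) (hX : Integrable X μ) :
    infConv μ (fun _ : Fin n => adjES μ g) X
      = adjES μ (fun p => (n : EReal) * g p) X := by
  have hn0 : (0:EReal) < (n:EReal) := by exact_mod_cast hn
  have hnt : (n:EReal) ≠ ⊤ := EReal.natCast_ne_top n
  have hnr : (n:ℝ) ≠ 0 := by exact_mod_cast hn.ne'
  apply le_antisymm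
  · refine (iInf₂_le (fun (_ : Fin n) ω => X ω / n)
      ⟨fun _ => hX.div_const _, fun ω => by simp; field_simp⟩).trans ?_
    · rw [Finset.sum_const, Finset.card_univ, Fintype.card_fin, EReal.nsmul_eq_mul, mul_comm,
        ← EReal.le_div_iff_mul_le hn0 hnt]
      refine iSup₂_le fun p hp => ?_
      rw [EReal.le_div_iff_mul_le hn0 hnt, mul_comm, aux_mul_sub]
      refine (EReal.sub_le_sub (aux_ES_scale μ hn X p) le_rfl).trans ?_
      exact le_iSup₂ (f := fun p (_ : p ∈ Icc (0:ℝ) 1) => ES μ X p - (n:EReal) * g p) p hp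
  · refine le_iInf₂ fun Y hY => iSup₂_le fun p hp => ?_
    calc ES μ X p - (n:EReal) * g p ≤ (∑ i, ES μ (Y i) p) - (n:EReal) * g p :=
          EReal.sub_le_sub (aux_ES_subadd μ X hX Y hY.1 hY.2 hp) le_rfl
      _ = ∑ i, (ES μ (Y i) p - g p) := by
          simp only [sub_eq_add_neg]
          rw [Finset.sum_add_distrib, Finset.sum_const, Finset.card_univ, Fintype.card_fin,
            EReal.nsmul_eq_mul, mul_neg]
      _ ≤ ∑ i, adjES μ g (Y i) := Finset.sum_le_sum fun i _ =>
          le_iSup₂ (f := fun p (_ : p ∈ Icc (0:ℝ) 1) => ES μ (Y i) p - g p) p hp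
end

section
/- Let g ∈ G with g(0) = 0. Then for every X ∈ L^1, inf_{n∈ℕ} (□_{i=1}^n ES^g)(X) ≥ E[X] > −∞; consequently, ES^g has limited regulatory arbitrage: ES^g(X) − inf_{n∈ℕ}(□_{i=1}^n ES^g)(X) < ∞ for every X ∈ L^1 with ES^g(X) < ∞. -/
open MeasureTheory Set Filter

variable {Ω : Type*} [MeasurableSpace Ω]

theorem VaRr_le_iff (μ : Measure Ω) [IsProbabilityMeasure μ] (X : Ω → ℝ) (hX : AEMeasurable X μ)
    {q : ℝ} (hq : q ∈ Set.Ioo (0:ℝ) 1) (x : ℝ) :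
    VaRr μ X q ≤ x ↔ q ≤ ProbabilityTheory.cdf (μ.map X) x := by
  haveI : IsProbabilityMeasure (μ.map X) := Measure.isProbabilityMeasure_map hX
  have hset : {x : ℝ | ENNReal.ofReal q ≤ μ {ω | X ω ≤ x}}
      = {x : ℝ | q ≤ ProbabilityTheory.cdf (μ.map X) x} := by
    ext y
    have h1 : μ {ω | X ω ≤ y} = ENNReal.ofReal (ProbabilityTheory.cdf (μ.map X) y) := by
      rw [ProbabilityTheory.ofReal_cdf, Measure.map_apply_of_aemeasurable hX measurableSet_Iic]
      rfl
    simp only [Set.mem_setOf_eq, h1]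
    exact ENNReal.ofReal_le_ofReal_iff (ProbabilityTheory.cdf_nonneg _ _)
  unfold VaRr
  rw [hset]
  set F := ProbabilityTheory.cdf (μ.map X) with hF
  have hmono : Monotone F := ProbabilityTheory.monotone_cdf _
  have hbdd : BddBelow {x : ℝ | q ≤ F x} := by
    have h := (ProbabilityTheory.tendsto_cdf_atBot (μ.map X)).eventually (gt_mem_nhds hq.1)
    obtain ⟨a, ha⟩ := h.exists
    refine ⟨a, fun y hy => ?_⟩
    by_contra hlt
    have h2 : F y ≤ F a := hmono (not_le.1 hlt).le
    exact absurd (lt_of_le_of_lt (le_trans hy h2) ha) (lt_irrefl _)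
  have hne : {x : ℝ | q ≤ F x}.Nonempty := by
    have h := (ProbabilityTheory.tendsto_cdf_atTop (μ.map X)).eventually (lt_mem_nhds hq.2)
    obtain ⟨a, ha⟩ := h.exists
    exact ⟨a, ha.le⟩
  constructor
  · intro h
    have hev : ∀ᶠ y in nhdsWithin x (Set.Ioi x), q ≤ F y := by
      filter_upwards [self_mem_nhdsWithin] with y hy
      obtain ⟨z, hz, hzy⟩ := exists_lt_of_csInf_lt hne (lt_of_le_of_lt h hy)
      exact le_trans hz (hmono hzy.le)
    have ht : Tendsto F (nhdsWithin x (Set.Ioi x)) (nhds (F x)) :=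
      (F.right_continuous x).tendsto.mono_left (nhdsWithin_mono _ Set.Ioi_subset_Ici_self)
    exact ge_of_tendsto ht hev
  · intro h
    exact csInf_le hbdd h

theorem integral_VaRr (μ : Measure Ω) [IsProbabilityMeasure μ] (X : Ω → ℝ)
    (hX : Integrable X μ) :
    ∫ q in Set.Ioo (0:ℝ) 1, VaRr μ X q = ∫ ω, X ω ∂μ := by
  have hXm : AEMeasurable X μ := hX.aemeasurable
  haveI : IsProbabilityMeasure (μ.map X) := Measure.isProbabilityMeasure_map hXm
  have hmono : MonotoneOn (VaRr μ X) (Set.Ioo (0:ℝ) 1) := by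
    intro a ha b hb hab
    rw [VaRr_le_iff μ X hXm ha]
    exact le_trans hab ((VaRr_le_iff μ X hXm hb _).1 le_rfl)
  have hVm : AEMeasurable (VaRr μ X) (volume.restrict (Set.Ioo (0:ℝ) 1)) :=
    aemeasurable_restrict_of_monotoneOn measurableSet_Ioo hmono
  have hmap : (volume.restrict (Set.Ioo (0:ℝ) 1)).map (VaRr μ X) = μ.map X := by
    haveI : IsFiniteMeasure (volume.restrict (Set.Ioo (0:ℝ) 1)) :=
      ⟨by simp⟩
    refine Measure.ext_of_Iic _ _ fun x => ?_
    rw [Measure.map_apply_of_aemeasurable hVm measurableSet_Iic, ← ProbabilityTheory.ofReal_cdf,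
      Measure.restrict_apply' measurableSet_Ioo]
    have h1 := ProbabilityTheory.cdf_le_one (μ.map X) x
    have hset : VaRr μ X ⁻¹' Set.Iic x ∩ Set.Ioo 0 1
        = Set.Iic (ProbabilityTheory.cdf (μ.map X) x) ∩ Set.Ioo 0 1 := by
      ext q
      simp only [Set.mem_inter_iff, Set.mem_preimage, Set.mem_Iic]
      constructor
      · rintro ⟨h, hq⟩
        exact ⟨(VaRr_le_iff μ X hXm hq x).1 h, hq⟩
      · rintro ⟨h, hq⟩
        exact ⟨(VaRr_le_iff μ X hXm hq x).2 h, hq⟩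
    rw [hset]
    apply le_antisymm
    · calc _ ≤ volume (Set.Ioc 0 (ProbabilityTheory.cdf (μ.map X) x)) :=
            measure_mono fun q hq => ⟨hq.2.1, hq.1⟩
        _ = _ := by simp
    · calc _ = volume (Set.Ioo 0 (ProbabilityTheory.cdf (μ.map X) x)) := by simp
        _ ≤ volume (Set.Iic (ProbabilityTheory.cdf (μ.map X) x) ∩ Set.Ioo 0 1) :=
            measure_mono fun q hq => ⟨hq.2.le, hq.1, lt_of_lt_of_le hq.2 h1⟩
  have e1 := integral_map (f := fun y : ℝ => y) hVm aestronglyMeasurable_id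
  have e2 := integral_map (f := fun y : ℝ => y) hXm aestronglyMeasurable_id
  rw [← e1, ← e2, hmap]

theorem le_adjES (μ : Measure Ω) [IsProbabilityMeasure μ] (g : ℝ → EReal) (hg0 : g 0 = 0)
    (X : Ω → ℝ) (hX : Integrable X μ) :
    ((∫ ω, X ω ∂μ : ℝ) : EReal) ≤ adjES μ g X := by
  have h : ES μ X 0 - g 0 = ((∫ ω, X ω ∂μ : ℝ) : EReal) := by
    unfold ES
    rw [if_neg (by norm_num), hg0, integral_VaRr μ X hX]
    simp
  rw [← h]
  exact le_iSup₂_of_le (f := fun p (_ : p ∈ Set.Icc (0:ℝ) 1) => ES μ X p - g p) 0 (by simp) le_rfl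

/-- Let `g ∈ 𝒢` with `g(0) = 0`. Then for every `X ∈ L¹` the
infimum over `n` of the `n`-fold inf-convolutions of `ES^g` is at least `E[X]`
(hence `> -∞`), and consequently `ES^g` has limited regulatory arbitrage:
`ES^g(X) - inf_n (□_{i=1}^n ES^g)(X) < ∞` whenever `ES^g(X) < ∞`. -/
theorem stmt8 (μ : Measure Ω) [IsProbabilityMeasure μ] (hatomless : Atomless μ)
    (g : ℝ → EReal) (hg : IsRiskProfile g) (hg0 : g 0 = 0)
    (X : Ω → ℝ) (hX : Integrable X μ) :
    (((∫ ω, X ω ∂μ : ℝ) : EReal)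
        ≤ ⨅ (n : ℕ) (_ : 0 < n), infConv μ (fun _ : Fin n => adjES μ g) X) ∧
    (⨅ (n : ℕ) (_ : 0 < n), infConv μ (fun _ : Fin n => adjES μ g) X) ≠ ⊥ ∧
    (adjES μ g X ≠ ⊤ →
      adjES μ g X - (⨅ (n : ℕ) (_ : 0 < n), infConv μ (fun _ : Fin n => adjES μ g) X)
        ≠ ⊤) := by
  have key : ((∫ ω, X ω ∂μ : ℝ) : EReal)
        ≤ ⨅ (n : ℕ) (_ : 0 < n), infConv μ (fun _ : Fin n => adjES μ g) X := by
    refine le_iInf₂ fun n _ => le_iInf₂ fun Y hY => ?_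
    have h1 : ∫ ω, X ω ∂μ = ∑ i, ∫ ω, Y i ω ∂μ := by
      rw [← integral_finsetSum _ (fun i _ => hY.1 i)]
      exact integral_congr_ae (Eventually.of_forall fun ω => (hY.2 ω).symm)
    rw [h1]
    have h2 : ((∑ i, ∫ ω, Y i ω ∂μ : ℝ) : EReal) = ∑ i, ((∫ ω, Y i ω ∂μ : ℝ) : EReal) :=
      map_sum (⟨⟨Real.toEReal, EReal.coe_zero⟩, EReal.coe_add⟩ : ℝ →+ EReal) _ _
    rw [h2]
    exact Finset.sum_le_sum fun i _ => le_adjES μ g hg0 (Y i) (hY.1 i)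
  have hbot : (⨅ (n : ℕ) (_ : 0 < n), infConv μ (fun _ : Fin n => adjES μ g) X) ≠ ⊥ :=
    fun h => EReal.coe_ne_bot _ (le_bot_iff.1 (h ▸ key))
  refine ⟨key, hbot, fun h => ?_⟩
  rw [sub_eq_add_neg]
  exact EReal.add_ne_top h (by simpa [EReal.neg_eq_top_iff] using hbot)
end
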